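/- Let ξ = Δ_{ξ_1 ξ_2 ...} be the random variable with independent Q̃-symbols, where ξ_k are independent with P(ξ_k = i) = p_{ik}. Then the distribution μ_ξ on [0,1] is of pure type: it is either purely absolutely continuous, purely atomic, or purely singular continuous. Moreover: μ_ξ is purely absolutely continuous iff ∏_{k=1}^∞ ∑_{i} √(p_{ik} q_{ik}) > 0; purely atomic iff ∏_{k=1}^∞ max_i p_{ik} > 0; and purely singular continuous iff both products are 0. -/

import Mathlib

open MeasureTheory Filter Finset Topology

/-- The coding map of the `Q̃`-representation: it sends a digit sequence
`ω`, with `k`-th digit in `{0, 1, ..., N k}`, to the point of `[0,1]` given by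
formula (5) of the paper: `x = ∑_k D_k(x) L_{k-1}(x)`, i.e. the unique point in
the intersection of the nested cylinder intervals `Δ_{ω₁...ω_k}`. -/
noncomputable def codingMap (N : ℕ → ℕ) (q : (k : ℕ) → Fin (N k + 1) → ℝ)
    (ω : (k : ℕ) → Fin (N k + 1)) : ℝ :=
  ∑' k : ℕ, (∑ j : Fin (N k + 1), if (j : ℕ) < (ω k : ℕ) then q k j else 0) *
    ∏ s ∈ Finset.range k, q s (ω s)

/-- `Γ_{Q̃(V)}`: the set of points of `[0,1]` admitting a `Q̃`-representation
whose `k`-th digit lies in `V k` for every `k`. -/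
noncomputable def QtSet (N : ℕ → ℕ) (q : (k : ℕ) → Fin (N k + 1) → ℝ)
    (V : (k : ℕ) → Finset (Fin (N k + 1))) : Set ℝ :=
  codingMap N q '' {ω | ∀ k, ω k ∈ V k}

/-! Under the coding map the sequence of `Q̃`-digits of a uniform point of `[0,1]` becomes an
infinite product measure `⨂ Q k`: the rank-`n` cylinder intervals are disjoint, each has the length
`∏ q` that the product gives to its cylinder, and they shrink to points. So `⨂ Q k` is carried to
Lebesgue measure on `[0,1]`, and since the coding map is injective off the countable set of
sequences that are eventually `0`, absolute continuity, singularity and atoms of `μ_ξ` can be read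
off from `⨂ P k` and `⨂ Q k`.

For these products, Kakutani's dichotomy gives the first criterion. If the product of the affinities
`∑ √(p q)` vanishes, a finite block of coordinates already separates the two measures up to `ε`.
Otherwise `∑ (1 - affinity)` converges, and replacing `P k` by `Q k` in all but finitely many
coordinates changes the product little while leaving a bounded density. For atoms, the mass of a
sequence is at most `∏ max p`; if that product is positive, Borel–Cantelli shows that almost every
sequence eventually agrees with the sequence of most likely digits. -/

open scoped ENNReal

section Measure

variable {α β : Type*} [MeasurableSpace α] [MeasurableSpace β]

lemma mutuallySingular_of_forall_exists_measureReal_le {μ ν : Measure α} [IsFiniteMeasure μ]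
    [IsFiniteMeasure ν] (h : ∀ ε > 0, ∃ B, μ.real Bᶜ ≤ ε ∧ ν.real B ≤ ε) : μ ⟂ₘ ν := by
  refine Measure.mutuallySingular_of_disjoint (disjoint_iff.mpr ?_)
  have : IsFiniteMeasure (μ ⊓ ν) := isFiniteMeasure_of_le μ inf_le_left
  have hsmall (ε : ℝ) (hε : 0 < ε) : (μ ⊓ ν).real Set.univ ≤ 0 + ε := by
    obtain ⟨B, hμB, hνB⟩ := h (ε / 2) (half_pos hε)
    calc (μ ⊓ ν).real Set.univ ≤ (μ ⊓ ν).real Bᶜ + (μ ⊓ ν).real B := by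
          simpa only [Set.compl_union_self] using measureReal_union_le (μ := μ ⊓ ν) Bᶜ B
      _ ≤ μ.real Bᶜ + ν.real B :=
          add_le_add (ENNReal.toReal_mono (measure_ne_top μ _) (Measure.le_iff'.mp inf_le_left _))
            (ENNReal.toReal_mono (measure_ne_top ν _) (Measure.le_iff'.mp inf_le_right _))
      _ ≤ 0 + ε := by linarith
  exact Measure.measure_univ_eq_zero.mp ((measureReal_eq_zero_iff).mp
    ((le_of_forall_pos_le_add hsmall).antisymm measureReal_nonneg))

lemma absolutelyContinuous_of_forall_isSetRing {μ ν : Measure α} [IsFiniteMeasure μ]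
    [IsFiniteMeasure ν] {𝒞 : Set (Set α)} (h𝒞 : IsSetRing 𝒞) (huniv : Set.univ ∈ 𝒞)
    (hgen : ‹MeasurableSpace α› = MeasurableSpace.generateFrom 𝒞)
    (h : ∀ ε > 0, ∃ C : ℝ, ∀ A ∈ 𝒞, μ.real A ≤ C * ν.real A + ε) : μ ≪ ν := by
  refine Measure.AbsolutelyContinuous.mk fun S hS hνS => ?_
  refine (measureReal_eq_zero_iff).mp (le_antisymm ?_ measureReal_nonneg)
  refine le_of_forall_pos_le_add fun ε hε => ?_
  obtain ⟨C, hC⟩ := h (ε / 2) (half_pos hε)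
  obtain ⟨A, hA, hAS⟩ : ∃ A ∈ 𝒞, (μ + ν) (symmDiff A S) < .ofReal (ε / 2 / (|C| + 1)) :=
    exists_measure_symmDiff_lt_of_generateFrom_isSetRing h𝒞
      ⟨{Set.univ}, Set.countable_singleton _, Set.singleton_subset_iff.mpr huniv, by simp⟩ hgen hS
      (ENNReal.ofReal_pos.mpr (by positivity))
  have hA_meas : MeasurableSet A := hgen ▸ MeasurableSpace.measurableSet_generateFrom hA
  have hsmall : μ.real (symmDiff A S) + ν.real (symmDiff A S) ≤ ε / 2 / (|C| + 1) := by
    rw [← measureReal_add_apply]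
    exact ENNReal.toReal_le_of_le_ofReal (by positivity) hAS.le
  have hμ := (abs_le.mp (abs_measureReal_sub_le_measureReal_symmDiff (μ := μ)
    hA_meas.nullMeasurableSet hS.nullMeasurableSet)).1
  have hν := (abs_le.mp (abs_measureReal_sub_le_measureReal_symmDiff (μ := ν)
    hA_meas.nullMeasurableSet hS.nullMeasurableSet)).2
  rw [measureReal_def ν S, hνS, ENNReal.toReal_zero, sub_zero] at hν
  have hCA : C * ν.real A ≤ |C| * ν.real (symmDiff A S) :=
    mul_le_mul (le_abs_self C) hν measureReal_nonneg (abs_nonneg C)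
  have hbudget : (μ.real (symmDiff A S) + ν.real (symmDiff A S)) * (|C| + 1) ≤ ε / 2 :=
    (le_div_iff₀ (by positivity)).mp hsmall
  nlinarith [hC A hA, mul_nonneg (abs_nonneg C) (measureReal_nonneg (μ := μ) (s := symmDiff A S)),
    measureReal_nonneg (μ := ν) (s := symmDiff A S)]

lemma mutuallySingular_map_of_injOn_compl_countable [StandardBorelSpace α]
    [MeasurableSpace.CountablySeparated β] [MeasurableSingletonClass β] {μ ν : Measure α}
    {f : α → β} {Z : Set α} [NullSingletonClass (ν.map f)] (hf : Measurable f)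
    (hZ : Z.Countable) (hinj : Set.InjOn f Zᶜ) (hμν : μ ⟂ₘ ν) : μ.map f ⟂ₘ ν.map f := by
  obtain ⟨S, hS, hμS, hνS⟩ := hμν
  have hZ' : MeasurableSet (f '' Z) := (hZ.image f).measurableSet
  have himage : MeasurableSet (f '' (Sᶜ ∪ Z)) := by
    rw [← Set.sdiff_union_self, Set.image_union]
    exact (((hS.compl.diff hZ.measurableSet).image_of_measurable_injOn hf
      (hinj.mono fun _ hx => hx.2)).union hZ')
  have hpreimage : f ⁻¹' (f '' (Sᶜ ∪ Z)) ⊆ Sᶜ ∪ f ⁻¹' (f '' Z) := by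
    rintro y ⟨x, hx, hxy⟩
    by_cases hxZ : x ∈ Z
    · exact Or.inr ⟨x, hxZ, hxy⟩
    by_cases hyZ : y ∈ Z
    · exact Or.inr ⟨y, hyZ, rfl⟩
    · exact Or.inl (hinj hxZ hyZ hxy ▸ hx.resolve_right hxZ)
  refine (Measure.MutuallySingular.symm ⟨f '' (Sᶜ ∪ Z), himage, ?_, ?_⟩)
  · rw [Measure.map_apply hf himage]
    refine measure_mono_null hpreimage (measure_union_null hνS ?_)
    rw [← Measure.map_apply hf hZ', (hZ.image f).measure_zero]
  · rw [Measure.map_apply hf himage.compl]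
    refine measure_mono_null (fun x hx => ?_) hμS
    by_contra hxS
    exact hx ⟨x, Or.inl hxS, rfl⟩

lemma countable_preimage_singleton_of_injOn_compl {X Y : Type*} {f : X → Y} {Z : Set X}
    (hZ : Z.Countable) (hinj : Set.InjOn f Zᶜ) (y : Y) : (f ⁻¹' {y}).Countable := by
  have hsub : (f ⁻¹' {y} ∩ Zᶜ).Subsingleton := fun a ha b hb =>
    hinj ha.2 hb.2 (ha.1.trans hb.1.symm)
  exact (hZ.union hsub.countable).mono fun x hx => by
    by_cases hxZ : x ∈ Z
    · exact Or.inl hxZ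
    · exact Or.inr ⟨hx, hxZ⟩

lemma ae_measure_singleton_ne_zero_of_countable {μ : Measure α} {E : Set α} (hE : E.Countable)
    (h : ∀ᵐ x ∂μ, x ∈ E) : ∀ᵐ x ∂μ, μ {x} ≠ 0 := by
  have hnull : μ {x ∈ E | μ {x} = 0} = 0 := by
    rw [← Set.biUnion_of_singleton {x ∈ E | μ {x} = 0},
      measure_biUnion_null_iff (hE.mono fun _ hx => hx.1)]
    exact fun x hx => hx.2
  filter_upwards [h, measure_eq_zero_iff_ae_notMem.mp hnull] with x hxE hx hx0
  exact hx ⟨hxE, hx0⟩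

end Measure

section InfiniteProduct

lemma summable_one_sub_of_le_prod_range {f : ℕ → ℝ} {c : ℝ} (hf0 : ∀ k, 0 ≤ f k)
    (hf1 : ∀ k, f k ≤ 1) (hc : 0 < c) (h : ∀ n, c ≤ ∏ k ∈ range n, f k) :
    Summable fun k => 1 - f k := by
  refine summable_of_sum_range_le (c := -Real.log c) (fun k => sub_nonneg.mpr (hf1 k)) fun n => ?_
  have hexp : c ≤ Real.exp (-∑ k ∈ range n, (1 - f k)) := by
    refine (h n).trans ?_
    rw [← sum_neg_distrib, Real.exp_sum]
    exact prod_le_prod (fun k _ => hf0 k) fun k _ => by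
      linarith [Real.add_one_le_exp (-(1 - f k))]
  linarith [(Real.log_le_iff_le_exp hc).mpr hexp]

lemma one_sub_sum_one_sub_le_prod {ι : Type*} (s : Finset ι) {f : ι → ℝ} (hf0 : ∀ i, 0 ≤ f i)
    (hf1 : ∀ i, f i ≤ 1) : 1 - ∑ i ∈ s, (1 - f i) ≤ ∏ i ∈ s, f i := by
  classical
  induction s using Finset.induction_on with
  | empty => simp
  | insert i s hi ih =>
    rw [sum_insert hi, prod_insert hi]
    nlinarith [hf1 i, prod_le_one (fun j _ => hf0 j) fun j (_ : j ∈ s) => hf1 j]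

lemma exists_prod_range_lt_of_not_bddBelow {f : ℕ → ℝ}
    (h : ¬ ∃ c > 0, ∀ n, c ≤ ∏ k ∈ range n, f k) {ε : ℝ} (hε : 0 < ε) :
    ∃ n, ∏ k ∈ range n, f k < ε := by
  by_contra! hn
  exact h ⟨ε, hε, hn⟩

lemma countable_setOf_eventually_eq {E : ℕ → Type*} [∀ n, Countable (E n)] (x : ∀ n, E n) :
    {y : ∀ n, E n | ∀ᶠ k in atTop, y k = x k}.Countable := by
  refine (Set.countable_iUnion fun n =>
    Set.countable_range (Function.updateFinset x (range n))).mono fun y hy => ?_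
  obtain ⟨n, hn⟩ := eventually_atTop.mp hy
  refine Set.mem_iUnion.mpr ⟨n, fun k => y k, funext fun k => ?_⟩
  by_cases hk : k ∈ range n
  · simp only [Function.updateFinset, hk, dif_pos]
  · simp only [Function.updateFinset, hk, dif_neg, not_false_eq_true]
    exact (hn k (by simpa using hk)).symm

end InfiniteProduct

section Cylinder

variable {E : ℕ → Type*} [∀ n, MeasurableSpace (E n)]

lemma measure_ext_of_cylinder [∀ n, Countable (E n)] [∀ n, TopologicalSpace (E n)]
    [∀ n, DiscreteTopology (E n)] [∀ n, BorelSpace (E n)]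
    {μ ν : Measure (∀ n, E n)} [IsFiniteMeasure μ]
    (h : ∀ x n, μ (PiNat.cylinder x n) = ν (PiNat.cylinder x n)) : μ = ν := by
  rcases isEmpty_or_nonempty (∀ n, E n) with _ | ⟨⟨x₀⟩⟩
  · exact Subsingleton.elim μ ν
  refine ext_of_generate_finite {s | ∃ x n, s = PiNat.cylinder x n} ?_ ?_ ?_ ?_
  · exact BorelSpace.measurable_eq.trans
      (PiNat.isTopologicalBasis_cylinders E).borel_eq_generateFrom
  · rintro _ ⟨x, m, rfl⟩ _ ⟨y, n, rfl⟩ ⟨z, hzx, hzy⟩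
    refine ⟨z, max m n, ?_⟩
    rw [← PiNat.mem_cylinder_iff_eq.mp hzx, ← PiNat.mem_cylinder_iff_eq.mp hzy]
    ext y
    simp only [Set.mem_inter_iff, PiNat.mem_cylinder_iff, lt_max_iff, or_imp, forall_and]
  · rintro _ ⟨x, n, rfl⟩
    exact h x n
  · simpa only [PiNat.cylinder_zero] using h x₀ 0

lemma infinitePi_cylinder_eq_prod (P : ∀ n, Measure (E n)) [∀ n, IsProbabilityMeasure (P n)]
    [∀ n, MeasurableSingletonClass (E n)] (x : ∀ n, E n) (n : ℕ) :
    Measure.infinitePi P (PiNat.cylinder x n) = ∏ k ∈ range n, P k {x k} := by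
  rw [PiNat.cylinder_eq_pi, Measure.infinitePi_pi]
  exact fun k _ => measurableSet_singleton _

end Cylinder

lemma exists_isProbabilityMeasure_real_singleton_eq {α : Type*} [Fintype α] [MeasurableSpace α]
    [MeasurableSingletonClass α] {w : α → ℝ} (hw : ∀ i, 0 ≤ w i) (hsum : ∑ i, w i = 1) :
    ∃ P : Measure α, IsProbabilityMeasure P ∧ ∀ i, P.real {i} = w i := by
  have hsum' : ∑ i, ENNReal.ofReal (w i) = 1 := by
    rw [← ENNReal.ofReal_sum_of_nonneg fun i _ => hw i, hsum, ENNReal.ofReal_one]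
  refine ⟨(PMF.ofFintype _ hsum').toMeasure, inferInstance, fun i => ?_⟩
  rw [measureReal_def, PMF.toMeasure_apply_singleton _ _ (measurableSet_singleton i),
    PMF.ofFintype_apply, ENNReal.toReal_ofReal (hw i)]

lemma exists_measureReal_singleton_le_mul {α : Type*} [Finite α]
    [MeasurableSpace α] {P Q : Measure α} [IsFiniteMeasure Q] (hPQ : P ≪ Q) :
    ∃ C ≥ 1, ∀ i, P.real {i} ≤ C * Q.real {i} := by
  have hlarge (i : α) : ∀ᶠ C in atTop, P.real {i} ≤ C * Q.real {i} := by
    rcases (measureReal_nonneg (μ := Q) (s := {i})).eq_or_lt with hQ | hQ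
    · have hQi : Q {i} = 0 := (measureReal_eq_zero_iff).mp hQ.symm
      simp only [measureReal_def, hQi, hPQ hQi, ENNReal.toReal_zero, mul_zero, le_refl,
        eventually_true]
    · exact (tendsto_id.atTop_mul_const hQ).eventually_ge_atTop _
  exact ((eventually_ge_atTop 1).and (eventually_all.mpr hlarge)).exists

lemma measureReal_pi_singleton {ι : Type*} [Fintype ι] {X : ι → Type*}
    [∀ i, MeasurableSpace (X i)] (P : ∀ i, Measure (X i)) [∀ i, SigmaFinite (P i)]
    (x : ∀ i, X i) : (Measure.pi P).real {x} = ∏ i, (P i).real {x i} := by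
  simp only [measureReal_def, Measure.pi_singleton, ENNReal.toReal_prod]

lemma measureReal_pi_le_prod_mul {ι : Type*} [Fintype ι] {X : ι → Type*} [∀ i, Finite (X i)]
    [∀ i, MeasurableSpace (X i)] [∀ i, MeasurableSingletonClass (X i)] {P Q : ∀ i, Measure (X i)}
    [∀ i, IsFiniteMeasure (P i)] [∀ i, IsFiniteMeasure (Q i)] {C : ι → ℝ}
    (h : ∀ i x, (P i).real {x} ≤ C i * (Q i).real {x}) (S : Set (∀ i, X i)) :
    (Measure.pi P).real S ≤ (∏ i, C i) * (Measure.pi Q).real S := by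
  classical
  have (i : ι) : Fintype (X i) := Fintype.ofFinite _
  rw [← S.coe_toFinset, ← sum_measureReal_singleton, ← sum_measureReal_singleton, mul_sum]
  refine sum_le_sum fun x _ => ?_
  rw [measureReal_pi_singleton, measureReal_pi_singleton, ← prod_mul_distrib]
  exact prod_le_prod (fun i _ => measureReal_nonneg) fun i _ => h i (x i)

section HellingerAffinity

variable {α : Type*} [Fintype α] [MeasurableSpace α]

/-- The Hellinger affinity (Bhattacharyya coefficient) `∫ √(dP dQ)` of two measures on a finite
type, the quantity whose product over the coordinates decides Kakutani's dichotomy. -/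
noncomputable def hellingerAffinity (P Q : Measure α) : ℝ :=
  ∑ i, √(P.real {i} * Q.real {i})

lemma hellingerAffinity_nonneg (P Q : Measure α) : 0 ≤ hellingerAffinity P Q :=
  sum_nonneg fun _ _ => Real.sqrt_nonneg _

variable [MeasurableSingletonClass α]

section IsProbabilityMeasure

variable (P Q : Measure α) [IsProbabilityMeasure P] [IsProbabilityMeasure Q]

lemma sum_measureReal_singleton_eq_one : ∑ i, P.real {i} = 1 := by
  rw [sum_measureReal_singleton, coe_univ, probReal_univ]

lemma hellingerAffinity_self : hellingerAffinity P P = 1 := by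
  simp only [hellingerAffinity, Real.sqrt_mul_self measureReal_nonneg,
    sum_measureReal_singleton_eq_one]

lemma sum_sq_sqrt_sub_sqrt_eq :
    ∑ i, (√(P.real {i}) - √(Q.real {i})) ^ 2 = 2 * (1 - hellingerAffinity P Q) := by
  have hterm (i : α) : (√(P.real {i}) - √(Q.real {i})) ^ 2 =
      P.real {i} + Q.real {i} - 2 * √(P.real {i} * Q.real {i}) := by
    rw [Real.sqrt_mul measureReal_nonneg, sub_sq, Real.sq_sqrt measureReal_nonneg,
      Real.sq_sqrt measureReal_nonneg]
    ring
  simp only [hterm, sum_sub_distrib, sum_add_distrib, ← mul_sum,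
    sum_measureReal_singleton_eq_one, hellingerAffinity]
  ring

lemma hellingerAffinity_le_one : hellingerAffinity P Q ≤ 1 := by
  have hsq : 0 ≤ ∑ i, (√(P.real {i}) - √(Q.real {i})) ^ 2 := sum_nonneg fun _ _ => sq_nonneg _
  linarith [sum_sq_sqrt_sub_sqrt_eq P Q]

lemma measureReal_le_two_mul_add (T : Set α) :
    P.real T ≤ 2 * Q.real T + 4 * (1 - hellingerAffinity P Q) := by
  classical
  have hterm (i : α) :
      P.real {i} ≤ 2 * Q.real {i} + 2 * (√(P.real {i}) - √(Q.real {i})) ^ 2 := by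
    nlinarith [sq_nonneg (√(P.real {i}) - 2 * √(Q.real {i})),
      Real.sq_sqrt (measureReal_nonneg (μ := P) (s := {i})),
      Real.sq_sqrt (measureReal_nonneg (μ := Q) (s := {i}))]
  rw [← T.coe_toFinset, ← sum_measureReal_singleton, ← sum_measureReal_singleton]
  calc ∑ i ∈ T.toFinset, P.real {i}
      ≤ ∑ i ∈ T.toFinset, (2 * Q.real {i} + 2 * (√(P.real {i}) - √(Q.real {i})) ^ 2) :=
        sum_le_sum fun i _ => hterm i
    _ = 2 * ∑ i ∈ T.toFinset, Q.real {i} +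
          2 * ∑ i ∈ T.toFinset, (√(P.real {i}) - √(Q.real {i})) ^ 2 := by
        rw [sum_add_distrib, ← mul_sum, ← mul_sum]
    _ ≤ 2 * ∑ i ∈ T.toFinset, Q.real {i} + 2 * ∑ i, (√(P.real {i}) - √(Q.real {i})) ^ 2 := by
        gcongr
        exact subset_univ _
    _ = _ := by rw [sum_sq_sqrt_sub_sqrt_eq]; ring

end IsProbabilityMeasure

lemma exists_measureReal_le_hellingerAffinity (P Q : Measure α) [IsFiniteMeasure P]
    [IsFiniteMeasure Q] :
    ∃ T, P.real Tᶜ ≤ hellingerAffinity P Q ∧ Q.real T ≤ hellingerAffinity P Q := by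
  classical
  have hsqrt {a b : ℝ} (ha : 0 ≤ a) (hab : a ≤ b) : a ≤ √(a * b) :=
    Real.le_sqrt_of_sq_le (by nlinarith)
  have hle (μ : Measure α) (T : Finset α) [IsFiniteMeasure μ]
      (h : ∀ i ∈ T, μ.real {i} ≤ √(P.real {i} * Q.real {i})) :
      μ.real (T : Set α) ≤ hellingerAffinity P Q := by
    rw [← sum_measureReal_singleton]
    exact (sum_le_sum h).trans
      (sum_le_univ_sum_of_nonneg fun i => Real.sqrt_nonneg _)
  refine ⟨({i | Q.real {i} ≤ P.real {i}} : Finset α), ?_, hle Q _ fun i hi => ?_⟩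
  · rw [← coe_compl]
    refine hle P _ fun i hi => hsqrt measureReal_nonneg ?_
    simp only [mem_compl, mem_filter_univ, not_le] at hi
    exact hi.le
  · rw [mul_comm]
    exact hsqrt measureReal_nonneg (by simpa using hi)

section Pi

variable {ι : Type*} [Fintype ι] [DecidableEq ι] {X : ι → Type*} [∀ i, Fintype (X i)]
  [∀ i, MeasurableSpace (X i)] (P Q : ∀ i, Measure (X i))

lemma hellingerAffinity_pi [∀ i, SigmaFinite (P i)] [∀ i, SigmaFinite (Q i)] :
    hellingerAffinity (Measure.pi P) (Measure.pi Q) = ∏ i, hellingerAffinity (P i) (Q i) := by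
  simp only [hellingerAffinity, Fintype.prod_sum, measureReal_pi_singleton]
  refine sum_congr rfl fun x _ => ?_
  rw [← prod_mul_distrib, Real.sqrt_prod _ fun i _ => by positivity]

variable [∀ i, MeasurableSingletonClass (X i)]

lemma one_sub_hellingerAffinity_pi_le [∀ i, IsProbabilityMeasure (P i)]
    [∀ i, IsProbabilityMeasure (Q i)] :
    1 - hellingerAffinity (Measure.pi P) (Measure.pi Q) ≤
      ∑ i, (1 - hellingerAffinity (P i) (Q i)) := by
  rw [hellingerAffinity_pi]
  linarith [one_sub_sum_one_sub_le_prod univ (fun i => hellingerAffinity_nonneg (P i) (Q i))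
    fun i => hellingerAffinity_le_one (P i) (Q i)]

end Pi

end HellingerAffinity

section Kakutani

variable {ι : Type*} {X : ι → Type*} [∀ i, Fintype (X i)] [∀ i, MeasurableSpace (X i)]
  [∀ i, MeasurableSingletonClass (X i)] {P Q : ∀ i, Measure (X i)}
  [∀ i, IsProbabilityMeasure (P i)] [∀ i, IsProbabilityMeasure (Q i)]

/- Compare `P` with the hybrid family equal to `P` on `F` and to `Q` off `F`: it is dominated by
`Q` up to the constant `∏ i ∈ F, C i`, and close to `P` when the affinities off `F` are near `1`. -/
lemma measureReal_pi_le_prod_mul_add [Fintype ι] [DecidableEq ι] {C : ι → ℝ}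
    (hC : ∀ i x, (P i).real {x} ≤ C i * (Q i).real {x}) (F : Finset ι) (S : Set (∀ i, X i)) :
    (Measure.pi P).real S ≤ 2 * ((∏ i ∈ F, C i) * (Measure.pi Q).real S) +
      4 * ∑ i ∈ Fᶜ, (1 - hellingerAffinity (P i) (Q i)) := by
  have (i : ι) : IsProbabilityMeasure (F.piecewise P Q i) := by
    by_cases hi : i ∈ F
    · rw [piecewise_eq_of_mem _ _ _ hi]; infer_instance
    · rw [piecewise_eq_of_notMem _ _ _ hi]; infer_instance
  have hdom : (Measure.pi (F.piecewise P Q)).real S ≤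
      (∏ i ∈ F, C i) * (Measure.pi Q).real S := by
    have hprod : ∏ i, F.piecewise C 1 i = ∏ i ∈ F, C i := by
      simp only [prod_piecewise, univ_inter, Pi.one_apply, prod_const_one, mul_one]
    rw [← hprod]
    refine measureReal_pi_le_prod_mul (fun i x => ?_) S
    by_cases hi : i ∈ F
    · simpa only [piecewise_eq_of_mem _ _ _ hi] using hC i x
    · simp only [piecewise_eq_of_notMem _ _ _ hi, Pi.one_apply, one_mul, le_refl]
  have haff : 1 - hellingerAffinity (Measure.pi P) (Measure.pi (F.piecewise P Q)) ≤
      ∑ i ∈ Fᶜ, (1 - hellingerAffinity (P i) (Q i)) := by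
    refine (one_sub_hellingerAffinity_pi_le P (F.piecewise P Q)).trans_eq ?_
    refine (sum_subset_zero_on_sdiff (subset_univ Fᶜ) (fun i hi => ?_) fun i hi => ?_).symm
    · rw [piecewise_eq_of_mem _ _ _ (by simpa using hi), hellingerAffinity_self, sub_self]
    · rw [piecewise_eq_of_notMem _ _ _ (mem_compl.mp hi)]
  linarith [measureReal_le_two_mul_add (Measure.pi P) (Measure.pi (F.piecewise P Q)) S]

theorem absolutelyContinuous_infinitePi_of_summable (hPQ : ∀ i, P i ≪ Q i)
    (h : Summable fun i => 1 - hellingerAffinity (P i) (Q i)) :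
    Measure.infinitePi P ≪ Measure.infinitePi Q := by
  classical
  choose C hC1 hC using fun i => exists_measureReal_singleton_le_mul (hPQ i)
  refine absolutelyContinuous_of_forall_isSetRing isSetRing_measurableCylinders
    (univ_mem_measurableCylinders X) generateFrom_measurableCylinders.symm fun ε hε => ?_
  obtain ⟨F, hF⟩ := summable_iff_vanishing_norm.mp h (ε / 4) (by positivity)
  refine ⟨2 * ∏ i ∈ F, C i, fun A hA => ?_⟩
  obtain ⟨I, S, hS, rfl⟩ := (mem_measurableCylinders A).mp hA
  simp only [measureReal_def, Measure.infinitePi_cylinder _ hS]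
  simp only [← measureReal_def]
  have hhead : ∏ i ∈ F.subtype (· ∈ I), C i ≤ ∏ i ∈ F, C i := by
    rw [prod_subtype_eq_prod_filter]
    exact prod_le_prod_of_subset_of_one_le (filter_subset _ F)
      (fun i _ => zero_le_one.trans (hC1 i)) fun i _ _ => hC1 i
  have htail : ∑ i ∈ (F.subtype (· ∈ I))ᶜ, (1 - hellingerAffinity (P i) (Q i)) ≤ ε / 4 := by
    have hdisj : Disjoint ((F.subtype (· ∈ I))ᶜ.map (.subtype (· ∈ I))) F := by
      simp +contextual [disjoint_left]
    exact (sum_map _ (.subtype (· ∈ I)) fun i => 1 - hellingerAffinity (P i) (Q i)).symm.trans_le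
      ((Real.le_norm_self _).trans (hF _ hdisj).le)
  calc (Measure.pi fun i : I => P i).real S
      ≤ 2 * ((∏ i ∈ F.subtype (· ∈ I), C i) * (Measure.pi fun i : I => Q i).real S) +
          4 * ∑ i ∈ (F.subtype (· ∈ I))ᶜ, (1 - hellingerAffinity (P i) (Q i)) :=
        measureReal_pi_le_prod_mul_add (C := fun i : I => C i) (fun i => hC i) _ S
    _ ≤ 2 * ((∏ i ∈ F, C i) * (Measure.pi fun i : I => Q i).real S) + 4 * (ε / 4) := by gcongr
    _ = _ := by ring

theorem mutuallySingular_infinitePi_of_prod_lt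
    (h : ∀ ε > 0, ∃ s : Finset ι, ∏ i ∈ s, hellingerAffinity (P i) (Q i) < ε) :
    Measure.infinitePi P ⟂ₘ Measure.infinitePi Q := by
  classical
  refine mutuallySingular_of_forall_exists_measureReal_le fun ε hε => ?_
  obtain ⟨s, hs⟩ := h ε hε
  obtain ⟨T, hPT, hQT⟩ := exists_measureReal_le_hellingerAffinity
    (Measure.pi fun i : s => P i) (Measure.pi fun i : s => Q i)
  rw [hellingerAffinity_pi, prod_coe_sort s fun i => hellingerAffinity (P i) (Q i)] at hPT hQT
  refine ⟨cylinder s T, ?_, ?_⟩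
  · rw [compl_cylinder, measureReal_def,
      Measure.infinitePi_cylinder _ T.toFinite.measurableSet.compl]
    exact hPT.trans hs.le
  · rw [measureReal_def, Measure.infinitePi_cylinder _ T.toFinite.measurableSet]
    exact hQT.trans hs.le

end Kakutani

section Atoms

variable {E : ℕ → Type*} [∀ n, MeasurableSpace (E n)] [∀ n, MeasurableSingletonClass (E n)]
  {P : ∀ n, Measure (E n)} [∀ n, IsProbabilityMeasure (P n)]

lemma infinitePi_singleton_eq_zero (h : ¬ ∃ c > 0, ∀ n, c ≤ ∏ k ∈ range n, ⨆ i, (P k).real {i})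
    (x : ∀ n, E n) : Measure.infinitePi P {x} = 0 := by
  refine (measureReal_eq_zero_iff).mp (le_antisymm ?_ measureReal_nonneg)
  refine le_of_forall_pos_le_add fun ε hε => ?_
  obtain ⟨n, hn⟩ := exists_prod_range_lt_of_not_bddBelow h hε
  calc (Measure.infinitePi P).real {x} ≤ (Measure.infinitePi P).real (PiNat.cylinder x n) :=
        measureReal_mono (Set.singleton_subset_iff.mpr (PiNat.self_mem_cylinder x n))
    _ = ∏ k ∈ range n, (P k).real {x k} := by
        simp only [measureReal_def, infinitePi_cylinder_eq_prod, ENNReal.toReal_prod]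
    _ ≤ ∏ k ∈ range n, ⨆ i, (P k).real {i} :=
        prod_le_prod (fun k _ => measureReal_nonneg) fun k _ =>
          le_ciSup (f := fun i => (P k).real {i})
            ⟨1, Set.forall_mem_range.mpr fun _ => measureReal_le_one⟩ (x k)
    _ ≤ 0 + ε := by rw [zero_add]; exact hn.le

lemma ae_eventually_eq_of_summable {x : ∀ n, E n}
    (h : Summable fun k => 1 - (P k).real {x k}) :
    ∀ᵐ y ∂Measure.infinitePi P, ∀ᶠ k in atTop, y k = x k := by
  have hne (k : ℕ) : Measure.infinitePi P {y | y k ≠ x k} = .ofReal (1 - (P k).real {x k}) := by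
    rw [← probReal_compl_eq_one_sub (measurableSet_singleton _), ofReal_measureReal]
    exact (measurePreserving_eval_infinitePi P k).measure_preimage
      (measurableSet_singleton _).compl.nullMeasurableSet
  have hsum : ∑' k, Measure.infinitePi P {y | y k ≠ x k} ≠ ∞ := by
    simpa only [hne] using h.tsum_ofReal_ne_top
  filter_upwards [ae_eventually_notMem hsum] with y hy
  simpa only [Set.mem_ofPred_eq, not_not] using hy

lemma exists_ae_eventually_eq [∀ n, Finite (E n)]
    (h : ∃ c > 0, ∀ n, c ≤ ∏ k ∈ range n, ⨆ i, (P k).real {i}) :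
    ∃ x : ∀ n, E n, ∀ᵐ y ∂Measure.infinitePi P, ∀ᶠ k in atTop, y k = x k := by
  obtain ⟨c, hc, hcprod⟩ := h
  have (k : ℕ) : Nonempty (E k) := nonempty_of_isProbabilityMeasure (P k)
  choose x hx using fun k => exists_eq_ciSup_of_finite (f := fun i => (P k).real {i})
  refine ⟨x, ae_eventually_eq_of_summable (summable_one_sub_of_le_prod_range
    (fun _ => measureReal_nonneg) (fun _ => measureReal_le_one) hc ?_)⟩
  simpa only [hx] using hcprod

end Atoms

section DigitOffset

variable {n : ℕ}

/-- The offset of the `i`-th piece when an interval of unit length is cut, from left to right,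
into pieces of lengths `w 0, w 1, …`. -/
def digitOffset (w : Fin n → ℝ) (i : Fin n) : ℝ := ∑ j ∈ Iio i, w j

variable {w : Fin n → ℝ}

lemma digitOffset_nonneg (hw : ∀ i, 0 ≤ w i) (i : Fin n) : 0 ≤ digitOffset w i :=
  sum_nonneg fun j _ => hw j

lemma digitOffset_pos (hw : ∀ i, 0 < w i) {i j : Fin n} (hij : i < j) : 0 < digitOffset w j :=
  sum_pos (fun k _ => hw k) ⟨i, mem_Iio.mpr hij⟩

lemma digitOffset_add_eq_sum_Iic (w : Fin n → ℝ) (i : Fin n) :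
    digitOffset w i + w i = ∑ j ∈ Iic i, w j := by
  rw [digitOffset, ← Iio_insert, sum_insert notMem_Iio_self, add_comm]

lemma digitOffset_add_le_sum (hw : ∀ i, 0 ≤ w i) (i : Fin n) :
    digitOffset w i + w i ≤ ∑ j, w j := by
  rw [digitOffset_add_eq_sum_Iic]
  exact sum_le_univ_sum_of_nonneg hw

lemma digitOffset_add_le_digitOffset (hw : ∀ i, 0 ≤ w i) {i j : Fin n} (hij : i < j) :
    digitOffset w i + w i ≤ digitOffset w j := by
  rw [digitOffset_add_eq_sum_Iic]
  exact sum_le_sum_of_subset_of_nonneg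
    (fun _ hk => mem_Iio.mpr ((mem_Iic.mp hk).trans_lt hij)) fun k _ _ => hw k

end DigitOffset

section CodingMap

variable {N : ℕ → ℕ}

/-- The length of the rank-`n` cylinder interval `Δ_{ω₀...ω_{n-1}}`. -/
def cylinderLength (q : (k : ℕ) → Fin (N k + 1) → ℝ) (n : ℕ) (ω : (k : ℕ) → Fin (N k + 1)) : ℝ :=
  ∏ k ∈ range n, q k (ω k)

/-- The left endpoint of the rank-`n` cylinder interval `Δ_{ω₀...ω_{n-1}}`. -/
def cylinderLeft (q : (k : ℕ) → Fin (N k + 1) → ℝ) (n : ℕ) (ω : (k : ℕ) → Fin (N k + 1)) : ℝ :=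
  ∑ k ∈ range n, digitOffset (q k) (ω k) * cylinderLength q k ω

/-- The right endpoint of the rank-`n` cylinder interval `Δ_{ω₀...ω_{n-1}}`. -/
def cylinderRight (q : (k : ℕ) → Fin (N k + 1) → ℝ) (n : ℕ) (ω : (k : ℕ) → Fin (N k + 1)) : ℝ :=
  cylinderLeft q n ω + cylinderLength q n ω

lemma codingMap_eq_tsum (q : (k : ℕ) → Fin (N k + 1) → ℝ) (ω : (k : ℕ) → Fin (N k + 1)) :
    codingMap N q ω = ∑' k, digitOffset (q k) (ω k) * cylinderLength q k ω := by
  simp only [codingMap, digitOffset, cylinderLength, ← sum_filter, Fin.val_fin_lt,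
    filter_gt_eq_Iio]

variable {q : (k : ℕ) → Fin (N k + 1) → ℝ}

lemma cylinderLength_congr {n : ℕ} {x y : (k : ℕ) → Fin (N k + 1)} (h : y ∈ PiNat.cylinder x n) :
    cylinderLength q n y = cylinderLength q n x :=
  prod_congr rfl fun k hk => by rw [h k (mem_range.mp hk)]

lemma cylinderLeft_congr {n : ℕ} {x y : (k : ℕ) → Fin (N k + 1)} (h : y ∈ PiNat.cylinder x n) :
    cylinderLeft q n y = cylinderLeft q n x :=
  sum_congr rfl fun k hk => by
    rw [h k (mem_range.mp hk),
      cylinderLength_congr (PiNat.cylinder_anti x (mem_range.mp hk).le h)]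

lemma cylinderRight_congr {n : ℕ} {x y : (k : ℕ) → Fin (N k + 1)} (h : y ∈ PiNat.cylinder x n) :
    cylinderRight q n y = cylinderRight q n x := by
  rw [cylinderRight, cylinderRight, cylinderLeft_congr h, cylinderLength_congr h]

lemma cylinderLength_succ (n : ℕ) (ω : (k : ℕ) → Fin (N k + 1)) :
    cylinderLength q (n + 1) ω = cylinderLength q n ω * q n (ω n) :=
  prod_range_succ _ n

lemma cylinderLeft_succ (n : ℕ) (ω : (k : ℕ) → Fin (N k + 1)) :
    cylinderLeft q (n + 1) ω =
      cylinderLeft q n ω + digitOffset (q n) (ω n) * cylinderLength q n ω :=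
  sum_range_succ _ n

lemma cylinderRight_succ (n : ℕ) (ω : (k : ℕ) → Fin (N k + 1)) :
    cylinderRight q (n + 1) ω =
      cylinderLeft q n ω + (digitOffset (q n) (ω n) + q n (ω n)) * cylinderLength q n ω := by
  rw [cylinderRight, cylinderLeft_succ, cylinderLength_succ]
  ring

lemma cylinderLength_nonneg (hq : ∀ k i, 0 ≤ q k i) (n : ℕ) (ω : (k : ℕ) → Fin (N k + 1)) :
    0 ≤ cylinderLength q n ω :=
  prod_nonneg fun k _ => hq k (ω k)

lemma cylinderLength_pos (hq : ∀ k i, 0 < q k i) (n : ℕ) (ω : (k : ℕ) → Fin (N k + 1)) :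
    0 < cylinderLength q n ω :=
  prod_pos fun k _ => hq k (ω k)

lemma cylinderLeft_le_cylinderRight (hq : ∀ k i, 0 ≤ q k i) (n : ℕ)
    (ω : (k : ℕ) → Fin (N k + 1)) : cylinderLeft q n ω ≤ cylinderRight q n ω :=
  le_add_of_nonneg_right (cylinderLength_nonneg hq n ω)

lemma monotone_cylinderLeft (hq : ∀ k i, 0 ≤ q k i) (ω : (k : ℕ) → Fin (N k + 1)) :
    Monotone fun n => cylinderLeft q n ω :=
  monotone_nat_of_le_succ fun n => by
    rw [cylinderLeft_succ]
    exact le_add_of_nonneg_right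
      (mul_nonneg (digitOffset_nonneg (hq n) _) (cylinderLength_nonneg hq n ω))

lemma antitone_cylinderRight (hq : ∀ k i, 0 ≤ q k i) (hqs : ∀ k, ∑ i, q k i = 1)
    (ω : (k : ℕ) → Fin (N k + 1)) : Antitone fun n => cylinderRight q n ω :=
  antitone_nat_of_succ_le fun n => by
    rw [cylinderRight_succ]
    exact add_le_add_right (mul_le_of_le_one_left (cylinderLength_nonneg hq n ω)
      ((digitOffset_add_le_sum (hq n) _).trans_eq (hqs n))) _

lemma cylinderLeft_le_cylinderRight_of_any (hq : ∀ k i, 0 ≤ q k i) (hqs : ∀ k, ∑ i, q k i = 1)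
    (m n : ℕ) (ω : (k : ℕ) → Fin (N k + 1)) : cylinderLeft q m ω ≤ cylinderRight q n ω :=
  calc cylinderLeft q m ω ≤ cylinderLeft q (max m n) ω :=
        monotone_cylinderLeft hq ω (le_max_left m n)
    _ ≤ cylinderRight q (max m n) ω := cylinderLeft_le_cylinderRight hq _ ω
    _ ≤ cylinderRight q n ω := antitone_cylinderRight hq hqs ω (le_max_right m n)

lemma tendsto_cylinderLeft (hq : ∀ k i, 0 ≤ q k i) (hqs : ∀ k, ∑ i, q k i = 1)
    (ω : (k : ℕ) → Fin (N k + 1)) :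
    Tendsto (fun n => cylinderLeft q n ω) atTop (𝓝 (codingMap N q ω)) := by
  rw [codingMap_eq_tsum]
  exact (summable_of_sum_range_le
    (fun k => mul_nonneg (digitOffset_nonneg (hq k) _) (cylinderLength_nonneg hq k ω))
    fun n => cylinderLeft_le_cylinderRight_of_any hq hqs n 0 ω).hasSum.tendsto_sum_nat

lemma codingMap_mem_Icc (hq : ∀ k i, 0 ≤ q k i) (hqs : ∀ k, ∑ i, q k i = 1) (n : ℕ)
    (ω : (k : ℕ) → Fin (N k + 1)) :
    codingMap N q ω ∈ Set.Icc (cylinderLeft q n ω) (cylinderRight q n ω) :=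
  ⟨(monotone_cylinderLeft hq ω).ge_of_tendsto (tendsto_cylinderLeft hq hqs ω) n,
    le_of_tendsto' (tendsto_cylinderLeft hq hqs ω) fun m =>
      cylinderLeft_le_cylinderRight_of_any hq hqs m n ω⟩

lemma codingMap_mem_Icc_zero_one (hq : ∀ k i, 0 ≤ q k i) (hqs : ∀ k, ∑ i, q k i = 1)
    (ω : (k : ℕ) → Fin (N k + 1)) : codingMap N q ω ∈ Set.Icc 0 1 := by
  simpa only [cylinderRight, cylinderLeft, cylinderLength, range_zero, sum_empty, prod_empty,
    zero_add] using codingMap_mem_Icc hq hqs 0 ω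

lemma tendsto_cylinderLength {q : (k : ℕ) → Fin (N k + 1) → ℝ} (hq : ∀ k i, 0 ≤ q k i)
    (hmax : Tendsto (fun n => ∏ k ∈ range n, ⨆ i, q k i) atTop (𝓝 0))
    (ω : (k : ℕ) → Fin (N k + 1)) : Tendsto (fun n => cylinderLength q n ω) atTop (𝓝 0) :=
  squeeze_zero (fun n => cylinderLength_nonneg hq n ω)
    (fun _ => prod_le_prod (fun k _ => hq k (ω k)) fun k _ =>
      le_ciSup (Set.finite_range (q k)).bddAbove (ω k)) hmax

lemma exists_Icc_cylinder_subset {q : (k : ℕ) → Fin (N k + 1) → ℝ} (hq : ∀ k i, 0 ≤ q k i)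
    (hqs : ∀ k, ∑ i, q k i = 1)
    (hmax : Tendsto (fun n => ∏ k ∈ range n, ⨆ i, q k i) atTop (𝓝 0))
    {ω : (k : ℕ) → Fin (N k + 1)} {U : Set ℝ} (hU : U ∈ 𝓝 (codingMap N q ω)) :
    ∃ n, Set.Icc (cylinderLeft q n ω) (cylinderRight q n ω) ⊆ U := by
  have hleft := tendsto_cylinderLeft hq hqs ω
  have hright : Tendsto (fun n => cylinderRight q n ω) atTop (𝓝 (codingMap N q ω)) := by
    simpa only [cylinderRight, add_zero] using hleft.add (tendsto_cylinderLength hq hmax ω)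
  exact ((hleft.Icc hright).eventually (eventually_smallSets_subset.mpr hU)).exists

lemma measurable_codingMap (hq : ∀ k i, 0 ≤ q k i) (hqs : ∀ k, ∑ i, q k i = 1) :
    Measurable (codingMap N q) := by
  refine measurable_of_tendsto_metrizable (fun n => ?_)
    (tendsto_pi_nhds.mpr (tendsto_cylinderLeft hq hqs))
  have hdigit (k : ℕ) (g : Fin (N k + 1) → ℝ) :
      Measurable fun ω : (k : ℕ) → Fin (N k + 1) => g (ω k) :=
    (measurable_of_finite g).comp (measurable_pi_apply k)
  exact Finset.measurable_fun_sum _ fun k _ =>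
    (hdigit k _).mul (Finset.measurable_fun_prod _ fun s _ => hdigit s _)

lemma cylinderRight_le_cylinderLeft_of_lt (hq : ∀ k i, 0 ≤ q k i) {n : ℕ}
    {x y : (k : ℕ) → Fin (N k + 1)} (h : y ∈ PiNat.cylinder x n) (hlt : x n < y n) :
    cylinderRight q (n + 1) x ≤ cylinderLeft q (n + 1) y := by
  rw [cylinderRight_succ, cylinderLeft_succ, cylinderLeft_congr h, cylinderLength_congr h]
  exact add_le_add_right (mul_le_mul_of_nonneg_right
    (digitOffset_add_le_digitOffset (hq n) hlt) (cylinderLength_nonneg hq n x)) _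

lemma cylinderRight_le_cylinderLeft_or (hq : ∀ k i, 0 ≤ q k i)
    {x y : (k : ℕ) → Fin (N k + 1)} (hne : x ≠ y) :
    cylinderRight q (PiNat.firstDiff x y + 1) x ≤ cylinderLeft q (PiNat.firstDiff x y + 1) y ∨
      cylinderRight q (PiNat.firstDiff x y + 1) y ≤ cylinderLeft q (PiNat.firstDiff x y + 1) x := by
  rcases lt_or_gt_of_ne (PiNat.apply_firstDiff_ne hne) with hlt | hlt
  · exact Or.inl (cylinderRight_le_cylinderLeft_of_lt hq
      (fun _ hk => (PiNat.apply_eq_of_lt_firstDiff hk).symm) hlt)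
  · exact Or.inr (cylinderRight_le_cylinderLeft_of_lt hq
      (fun _ hk => PiNat.apply_eq_of_lt_firstDiff hk) hlt)

lemma disjoint_Ico_cylinder (hq : ∀ k i, 0 ≤ q k i) (hqs : ∀ k, ∑ i, q k i = 1) {n : ℕ}
    {x y : (k : ℕ) → Fin (N k + 1)} (hxy : y ∉ PiNat.cylinder x n) :
    Disjoint (Set.Ico (cylinderLeft q n x) (cylinderRight q n x))
      (Set.Ico (cylinderLeft q n y) (cylinderRight q n y)) := by
  have hne : x ≠ y := by
    rintro rfl
    exact hxy (PiNat.self_mem_cylinder x n)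
  have hn : PiNat.firstDiff x y + 1 ≤ n := by
    by_contra! hn
    exact hxy ((PiNat.mem_cylinder_comm x y n).mpr
      ((PiNat.mem_cylinder_iff_le_firstDiff hne n).mpr (Nat.lt_succ_iff.mp hn)))
  refine Set.disjoint_left.mpr fun t htx hty => ?_
  rcases cylinderRight_le_cylinderLeft_or hq hne with h | h
  · linarith [htx.2, hty.1, antitone_cylinderRight hq hqs x hn, monotone_cylinderLeft hq y hn]
  · linarith [hty.2, htx.1, antitone_cylinderRight hq hqs y hn, monotone_cylinderLeft hq x hn]

lemma cylinderLeft_lt_codingMap (hq : ∀ k i, 0 < q k i) (hqs : ∀ k, ∑ i, q k i = 1)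
    {ω : (k : ℕ) → Fin (N k + 1)} (hω : ¬ ∀ᶠ k in atTop, ω k = 0) (n : ℕ) :
    cylinderLeft q n ω < codingMap N q ω := by
  obtain ⟨k, hnk, hk⟩ := frequently_atTop.mp (not_eventually.mp hω) n
  have hq0 (k i) : 0 ≤ q k i := (hq k i).le
  calc cylinderLeft q n ω ≤ cylinderLeft q k ω := monotone_cylinderLeft hq0 ω hnk
    _ < cylinderLeft q (k + 1) ω := by
        rw [cylinderLeft_succ]
        exact lt_add_of_pos_right _ (mul_pos (digitOffset_pos (hq k) (Fin.pos_iff_ne_zero.mpr hk))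
          (cylinderLength_pos hq k ω))
    _ ≤ codingMap N q ω := (codingMap_mem_Icc hq0 hqs (k + 1) ω).1

lemma injOn_codingMap (hq : ∀ k i, 0 < q k i) (hqs : ∀ k, ∑ i, q k i = 1) :
    Set.InjOn (codingMap N q) {ω | ∀ᶠ k in atTop, ω k = 0}ᶜ := by
  have hq0 (k i) : 0 ≤ q k i := (hq k i).le
  intro x hx y hy hxy
  by_contra hne
  rcases cylinderRight_le_cylinderLeft_or hq0 hne with h | h
  · exact absurd hxy (((codingMap_mem_Icc hq0 hqs _ x).2.trans h).trans_lt
      (cylinderLeft_lt_codingMap hq hqs hy _)).ne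
  · exact absurd hxy (((codingMap_mem_Icc hq0 hqs _ y).2.trans h).trans_lt
      (cylinderLeft_lt_codingMap hq hqs hx _)).ne'

end CodingMap

section Lebesgue

lemma exists_finset_cylinder_transversal {E : ℕ → Type*} [∀ k, Finite (E k)] (n : ℕ) :
    ∃ T : Finset (∀ k, E k), (∀ y, ∃ x ∈ T, y ∈ PiNat.cylinder x n) ∧
      (T : Set (∀ k, E k)).Pairwise fun x y => y ∉ PiNat.cylinder x n := by
  classical
  rcases isEmpty_or_nonempty (∀ k, E k) with hE | ⟨⟨x₀⟩⟩
  · exact ⟨∅, fun y => hE.elim y, by simp only [coe_empty, Set.pairwise_empty]⟩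
  let extend (w : ∀ k : range n, E k) : ∀ k, E k := Function.updateFinset x₀ (range n) w
  have hextend {w : ∀ k : range n, E k} {k : ℕ} (hk : k < n) :
      extend w k = w ⟨k, mem_range.mpr hk⟩ := dif_pos (mem_range.mpr hk)
  refine ⟨(Set.finite_range extend).toFinset, fun y => ⟨extend fun k => y k, ?_, ?_⟩, ?_⟩
  · exact (Set.Finite.mem_toFinset _).mpr ⟨_, rfl⟩
  · exact fun k hk => (hextend (w := fun k => y k) hk).symm
  · rw [Set.Finite.coe_toFinset]
    rintro _ ⟨v, rfl⟩ _ ⟨w, rfl⟩ hvw hmem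
    refine hvw (congrArg extend (funext fun k => ?_))
    have hk := mem_range.mp k.2
    exact ((hextend hk).symm.trans (hmem k hk).symm).trans (hextend hk)

variable {N : ℕ → ℕ}

/-- The matrix of digit probabilities `(q_{ik})` of a sequence of laws on the digit sets. -/
abbrev digitProb (Q : ∀ k, Measure (Fin (N k + 1))) (k : ℕ) (i : Fin (N k + 1)) : ℝ :=
  (Q k).real {i}

variable {Q : ∀ k, Measure (Fin (N k + 1))} [∀ k, IsProbabilityMeasure (Q k)]

lemma infinitePi_cylinder_eq_volume_Ico (x : ∀ k, Fin (N k + 1)) (n : ℕ) :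
    Measure.infinitePi Q (PiNat.cylinder x n) =
      volume (Set.Ico (cylinderLeft (digitProb Q) n x) (cylinderRight (digitProb Q) n x)) := by
  rw [infinitePi_cylinder_eq_prod, Real.volume_Ico, cylinderRight, add_sub_cancel_left,
    cylinderLength, ENNReal.ofReal_prod_of_nonneg fun _ _ => measureReal_nonneg]
  exact prod_congr rfl fun _ _ => (ofReal_measureReal (measure_ne_top _ _)).symm

variable (Q) in
lemma infinitePi_setOf_Icc_subset_le_volume (U : Set ℝ) (n : ℕ) :
    Measure.infinitePi Q {ω | Set.Icc (cylinderLeft (digitProb Q) n ω)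
      (cylinderRight (digitProb Q) n ω) ⊆ U} ≤ volume U := by
  classical
  obtain ⟨T, hcover, hsep⟩ := exists_finset_cylinder_transversal (E := fun k => Fin (N k + 1)) n
  set I : (∀ k, Fin (N k + 1)) → Set ℝ :=
    fun ω => Set.Icc (cylinderLeft (digitProb Q) n ω) (cylinderRight (digitProb Q) n ω)
  set J : (∀ k, Fin (N k + 1)) → Set ℝ :=
    fun ω => Set.Ico (cylinderLeft (digitProb Q) n ω) (cylinderRight (digitProb Q) n ω)
  have hdisj : (↑{x ∈ T | I x ⊆ U} : Set (∀ k, Fin (N k + 1))).PairwiseDisjoint J :=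
    fun x hx y hy hxy => disjoint_Ico_cylinder (fun _ _ => measureReal_nonneg)
      (fun k => sum_measureReal_singleton_eq_one (Q k))
      (hsep (mem_filter.mp hx).1 (mem_filter.mp hy).1 hxy)
  calc Measure.infinitePi Q {ω | I ω ⊆ U}
      ≤ Measure.infinitePi Q (⋃ x ∈ {x ∈ T | I x ⊆ U}, PiNat.cylinder x n) := by
        refine measure_mono fun ω hω => ?_
        obtain ⟨x, hxT, hx⟩ := hcover ω
        have hI : I ω = I x := congrArg₂ Set.Icc (cylinderLeft_congr hx) (cylinderRight_congr hx)
        exact Set.mem_biUnion (mem_coe.mpr (mem_filter.mpr ⟨hxT, hI.symm.trans_subset hω⟩)) hx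
    _ ≤ ∑ x ∈ T with I x ⊆ U, Measure.infinitePi Q (PiNat.cylinder x n) :=
        measure_biUnion_finset_le _ _
    _ = ∑ x ∈ T with I x ⊆ U, volume (J x) :=
        sum_congr rfl fun x _ => infinitePi_cylinder_eq_volume_Ico x n
    _ = volume (⋃ x ∈ {x ∈ T | I x ⊆ U}, J x) :=
        (measure_biUnion_finset hdisj fun _ _ => measurableSet_Ico).symm
    _ ≤ volume U := measure_mono (Set.iUnion₂_subset fun x hx =>
        Set.Ico_subset_Icc_self.trans (mem_filter.mp hx).2)

lemma map_codingMap_le_volume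
    (hmax : Tendsto (fun n => ∏ k ∈ range n, ⨆ i, digitProb Q k i) atTop (𝓝 0)) :
    (Measure.infinitePi Q).map (codingMap N (digitProb Q)) ≤ volume := by
  have hq (k i) : 0 ≤ digitProb Q k i := measureReal_nonneg
  have hqs (k) : ∑ i, digitProb Q k i = 1 := sum_measureReal_singleton_eq_one (Q k)
  have hopen (U : Set ℝ) (hU : IsOpen U) :
      (Measure.infinitePi Q).map (codingMap N (digitProb Q)) U ≤ volume U := by
    set A : ℕ → Set (∀ k, Fin (N k + 1)) := fun n =>
      {ω | Set.Icc (cylinderLeft (digitProb Q) n ω) (cylinderRight (digitProb Q) n ω) ⊆ U}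
    have hA : Monotone A := fun _ _ hmn ω hω =>
      (Set.Icc_subset_Icc (monotone_cylinderLeft hq ω hmn)
        (antitone_cylinderRight hq hqs ω hmn)).trans hω
    rw [Measure.map_apply (measurable_codingMap hq hqs) hU.measurableSet]
    calc Measure.infinitePi Q (codingMap N (digitProb Q) ⁻¹' U)
        ≤ Measure.infinitePi Q (⋃ n, A n) := measure_mono fun ω hω => Set.mem_iUnion.mpr
          (exists_Icc_cylinder_subset hq hqs hmax (hU.mem_nhds hω))
      _ = ⨆ n, Measure.infinitePi Q (A n) := hA.measure_iUnion
      _ ≤ volume U := iSup_le fun n => infinitePi_setOf_Icc_subset_le_volume Q U n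
  refine Measure.le_iff'.mpr fun S => ?_
  rw [S.measure_eq_iInf_isOpen volume]
  exact le_iInf₂ fun U hSU => le_iInf fun hU => (measure_mono hSU).trans (hopen U hU)

theorem map_codingMap_eq_volume_restrict
    (hmax : Tendsto (fun n => ∏ k ∈ range n, ⨆ i, digitProb Q k i) atTop (𝓝 0)) :
    (Measure.infinitePi Q).map (codingMap N (digitProb Q)) =
      volume.restrict (Set.Icc (0 : ℝ) 1) := by
  have hq (k i) : 0 ≤ digitProb Q k i := measureReal_nonneg
  have hqs (k) : ∑ i, digitProb Q k i = 1 := sum_measureReal_singleton_eq_one (Q k)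
  have hmeas := measurable_codingMap hq hqs
  have hsupp : ∀ᵐ t ∂(Measure.infinitePi Q).map (codingMap N (digitProb Q)),
      t ∈ Set.Icc (0 : ℝ) 1 :=
    (ae_map_iff hmeas.aemeasurable measurableSet_Icc).mpr
      (ae_of_all _ (codingMap_mem_Icc_zero_one hq hqs))
  have := Measure.isProbabilityMeasure_map (μ := Measure.infinitePi Q) hmeas.aemeasurable
  have : IsProbabilityMeasure (volume.restrict (Set.Icc (0 : ℝ) 1)) :=
    ⟨by rw [Measure.restrict_apply_univ, Real.volume_Icc, sub_zero, ENNReal.ofReal_one]⟩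
  refine Measure.eq_of_le_of_isProbabilityMeasure ?_
  rw [← Measure.restrict_eq_self_of_ae_mem hsupp]
  exact Measure.restrict_mono le_rfl (map_codingMap_le_volume hmax)

end Lebesgue

section CodedLaw

variable {N : ℕ → ℕ} {P Q : ∀ k, Measure (Fin (N k + 1))} [∀ k, IsProbabilityMeasure (P k)]
  [∀ k, IsProbabilityMeasure (Q k)]

lemma absolutelyContinuous_map_codingMap (hQ : ∀ k i, 0 < digitProb Q k i)
    (hmax : Tendsto (fun n => ∏ k ∈ range n, ⨆ i, digitProb Q k i) atTop (𝓝 0))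
    (h : ∃ c > 0, ∀ n, c ≤ ∏ k ∈ range n, hellingerAffinity (P k) (Q k)) :
    (Measure.infinitePi P).map (codingMap N (digitProb Q)) ≪ volume := by
  obtain ⟨c, hc, hcprod⟩ := h
  have hPQ (k : ℕ) : P k ≪ Q k := fun s hs => by
    have : s = ∅ := Set.eq_empty_of_forall_notMem fun i hi => (hQ k i).ne'
      ((measureReal_eq_zero_iff).mpr (measure_mono_null (Set.singleton_subset_iff.mpr hi) hs))
    rw [this, measure_empty]
  have hac := absolutelyContinuous_infinitePi_of_summable hPQ (summable_one_sub_of_le_prod_range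
    (fun _ => hellingerAffinity_nonneg _ _) (fun _ => hellingerAffinity_le_one _ _) hc hcprod)
  exact (hac.map (measurable_codingMap (fun k i => (hQ k i).le)
    fun k => sum_measureReal_singleton_eq_one (Q k))).trans
      (Measure.absolutelyContinuous_of_le (map_codingMap_le_volume hmax))

lemma mutuallySingular_map_codingMap (hQ : ∀ k i, 0 < digitProb Q k i)
    (hmax : Tendsto (fun n => ∏ k ∈ range n, ⨆ i, digitProb Q k i) atTop (𝓝 0))
    (h : ¬ ∃ c > 0, ∀ n, c ≤ ∏ k ∈ range n, hellingerAffinity (P k) (Q k)) :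
    (Measure.infinitePi P).map (codingMap N (digitProb Q)) ⟂ₘ volume := by
  have hqs (k) : ∑ i, digitProb Q k i = 1 := sum_measureReal_singleton_eq_one (Q k)
  have hmeas := measurable_codingMap (fun k i => (hQ k i).le) hqs
  have hms : Measure.infinitePi P ⟂ₘ Measure.infinitePi Q :=
    mutuallySingular_infinitePi_of_prod_lt fun ε hε =>
      (exists_prod_range_lt_of_not_bddBelow h hε).imp' range fun _ => id
  have hleb := map_codingMap_eq_volume_restrict hmax
  have : NullSingletonClass ((Measure.infinitePi Q).map (codingMap N (digitProb Q))) := by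
    rw [hleb]; infer_instance
  have hin := mutuallySingular_map_of_injOn_compl_countable hmeas
    (countable_setOf_eventually_eq 0) (injOn_codingMap hQ hqs) hms
  have hout : (Measure.infinitePi P).map (codingMap N (digitProb Q)) ⟂ₘ
      volume.restrict (Set.Icc (0 : ℝ) 1)ᶜ := by
    refine ⟨(Set.Icc 0 1)ᶜ, measurableSet_Icc.compl, ?_, ?_⟩
    · rw [Measure.map_apply hmeas measurableSet_Icc.compl]
      exact measure_mono_null (fun ω hω => hω (codingMap_mem_Icc_zero_one
        (fun k i => (hQ k i).le) hqs ω)) measure_empty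
    · rw [Measure.restrict_apply measurableSet_Icc.compl.compl, Set.compl_inter_self, measure_empty]
  rw [← Measure.restrict_add_restrict_compl (μ := volume) (measurableSet_Icc (a := (0 : ℝ))),
    ← hleb]
  exact hin.add_right hout

lemma map_codingMap_ne_zero {q : (k : ℕ) → Fin (N k + 1) → ℝ} (hq : ∀ k i, 0 ≤ q k i)
    (hqs : ∀ k, ∑ i, q k i = 1) : (Measure.infinitePi P).map (codingMap N q) ≠ 0 :=
  (Measure.map_ne_zero_iff (measurable_codingMap hq hqs).aemeasurable).mpr
    (IsProbabilityMeasure.ne_zero _)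

theorem absolutelyContinuous_map_codingMap_iff (hQ : ∀ k i, 0 < digitProb Q k i)
    (hmax : Tendsto (fun n => ∏ k ∈ range n, ⨆ i, digitProb Q k i) atTop (𝓝 0)) :
    (Measure.infinitePi P).map (codingMap N (digitProb Q)) ≪ volume ↔
      ∃ c > 0, ∀ n, c ≤ ∏ k ∈ range n, hellingerAffinity (P k) (Q k) := by
  refine ⟨fun hac => ?_, absolutelyContinuous_map_codingMap hQ hmax⟩
  by_contra h
  exact map_codingMap_ne_zero (fun k i => (hQ k i).le)
    (fun k => sum_measureReal_singleton_eq_one (Q k))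
    (Measure.eq_zero_of_absolutelyContinuous_of_mutuallySingular hac
      (mutuallySingular_map_codingMap hQ hmax h))

theorem mutuallySingular_map_codingMap_iff (hQ : ∀ k i, 0 < digitProb Q k i)
    (hmax : Tendsto (fun n => ∏ k ∈ range n, ⨆ i, digitProb Q k i) atTop (𝓝 0)) :
    (Measure.infinitePi P).map (codingMap N (digitProb Q)) ⟂ₘ volume ↔
      ¬ ∃ c > 0, ∀ n, c ≤ ∏ k ∈ range n, hellingerAffinity (P k) (Q k) :=
  ⟨fun hms h => map_codingMap_ne_zero (fun k i => (hQ k i).le)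
    (fun k => sum_measureReal_singleton_eq_one (Q k))
    (Measure.eq_zero_of_absolutelyContinuous_of_mutuallySingular
      (absolutelyContinuous_map_codingMap hQ hmax h) hms),
    mutuallySingular_map_codingMap hQ hmax⟩

end CodedLaw

section CodedAtoms

variable {N : ℕ → ℕ} {q : (k : ℕ) → Fin (N k + 1) → ℝ} {P : ∀ k, Measure (Fin (N k + 1))}
  [∀ k, IsProbabilityMeasure (P k)]

lemma measure_atoms_map_codingMap_eq_one (hq : ∀ k i, 0 ≤ q k i) (hqs : ∀ k, ∑ i, q k i = 1)
    (h : ∃ c > 0, ∀ n, c ≤ ∏ k ∈ range n, ⨆ i, digitProb P k i) :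
    (Measure.infinitePi P).map (codingMap N q)
      {t | (Measure.infinitePi P).map (codingMap N q) {t} ≠ 0} = 1 := by
  obtain ⟨x, hx⟩ := exists_ae_eventually_eq h
  have hmeas := measurable_codingMap hq hqs
  have := Measure.isProbabilityMeasure_map (μ := Measure.infinitePi P) hmeas.aemeasurable
  have hE := (countable_setOf_eventually_eq x).image (codingMap N q)
  have hmem : ∀ᵐ t ∂(Measure.infinitePi P).map (codingMap N q),
      t ∈ codingMap N q '' {y | ∀ᶠ k in atTop, y k = x k} :=
    (ae_map_iff hmeas.aemeasurable hE.measurableSet).mpr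
      (hx.mono fun y hy => Set.mem_image_of_mem _ hy)
  rw [measure_congr (eventuallyEq_univ.mpr (ae_measure_singleton_ne_zero_of_countable hE hmem)),
    measure_univ]

lemma map_codingMap_singleton_eq_zero (hq : ∀ k i, 0 < q k i) (hqs : ∀ k, ∑ i, q k i = 1)
    (h : ¬ ∃ c > 0, ∀ n, c ≤ ∏ k ∈ range n, ⨆ i, digitProb P k i) (t : ℝ) :
    (Measure.infinitePi P).map (codingMap N q) {t} = 0 := by
  have : NullSingletonClass (Measure.infinitePi P) := ⟨infinitePi_singleton_eq_zero h⟩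
  rw [Measure.map_apply (measurable_codingMap (fun k i => (hq k i).le) hqs)
    (measurableSet_singleton t)]
  exact (countable_preimage_singleton_of_injOn_compl (countable_setOf_eventually_eq 0)
    (injOn_codingMap hq hqs) t).measure_zero _

theorem measure_atoms_map_codingMap_eq_one_iff (hq : ∀ k i, 0 < q k i)
    (hqs : ∀ k, ∑ i, q k i = 1) :
    (Measure.infinitePi P).map (codingMap N q)
        {t | (Measure.infinitePi P).map (codingMap N q) {t} ≠ 0} = 1 ↔
      ∃ c > 0, ∀ n, c ≤ ∏ k ∈ range n, ⨆ i, digitProb P k i := by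
  refine ⟨fun hatoms => ?_, measure_atoms_map_codingMap_eq_one (fun k i => (hq k i).le) hqs⟩
  by_contra h
  simp [map_codingMap_singleton_eq_zero hq hqs h] at hatoms

theorem map_codingMap_singleton_eq_zero_iff (hq : ∀ k i, 0 < q k i) (hqs : ∀ k, ∑ i, q k i = 1) :
    (∀ t, (Measure.infinitePi P).map (codingMap N q) {t} = 0) ↔
      ¬ ∃ c > 0, ∀ n, c ≤ ∏ k ∈ range n, ⨆ i, digitProb P k i := by
  refine ⟨fun hnull h => ?_, map_codingMap_singleton_eq_zero hq hqs⟩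
  simpa [hnull] using measure_atoms_map_codingMap_eq_one (fun k i => (hq k i).le) hqs h

end CodedAtoms

/-- Theorem 2: the distribution `μ_ξ` of the random variable `ξ` with independent
`Q̃`-symbols (the pushforward under the coding map of the infinite product measure
with marginals `p_{ik}`) is of pure type.  It is purely absolutely continuous iff
`ρ = ∏_k ∑_i √(p_{ik} q_{ik}) > 0`; purely atomic iff `P_max = ∏_k max_i p_{ik} > 0`;
and purely singular continuous iff `ρ = 0 = P_max`.  (Positivity of an infinite
product of factors in `[0,1]` is expressed as the nonincreasing partial products
being bounded below by a positive constant, and its vanishing as the negation.) -/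
theorem pure_type_trichotomy (N : ℕ → ℕ) (p q : (k : ℕ) → Fin (N k + 1) → ℝ)
    (μ : Measure ((k : ℕ) → Fin (N k + 1))) [IsProbabilityMeasure μ]
    (hp : ∀ k i, 0 ≤ p k i) (hq : ∀ k i, 0 < q k i)
    (hps : ∀ k, ∑ i, p k i = 1) (hqs : ∀ k, ∑ i, q k i = 1)
    (hmax : Tendsto (fun n => ∏ k ∈ Finset.range n, ⨆ i, q k i) atTop (nhds 0))
    (hμ : ∀ (n : ℕ) (ω : (k : ℕ) → Fin (N k + 1)),
      μ {x | ∀ k < n, x k = ω k} = ENNReal.ofReal (∏ k ∈ Finset.range n, p k (ω k)))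
    (μξ : Measure ℝ) (hμξ : μξ = Measure.map (codingMap N q) μ) :
    -- pure type: exactly one of the three alternatives occurs
    ((μξ ≪ volume) ∨ (μξ {x : ℝ | μξ {x} ≠ 0} = 1) ∨
      (μξ.MutuallySingular volume ∧ ∀ x : ℝ, μξ {x} = 0)) ∧
    -- 1) purely absolutely continuous iff ρ > 0
    ((μξ ≪ volume) ↔
      ∃ c > 0, ∀ n, c ≤ ∏ k ∈ Finset.range n, ∑ i, Real.sqrt (p k i * q k i)) ∧
    -- 2) purely atomic iff P_max > 0
    ((μξ {x : ℝ | μξ {x} ≠ 0} = 1) ↔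
      ∃ c > 0, ∀ n, c ≤ ∏ k ∈ Finset.range n, ⨆ i, p k i) ∧
    -- 3) purely singular continuous iff ρ = 0 = P_max
    ((μξ.MutuallySingular volume ∧ ∀ x : ℝ, μξ {x} = 0) ↔
      (¬ ∃ c > 0, ∀ n, c ≤ ∏ k ∈ Finset.range n, ∑ i, Real.sqrt (p k i * q k i)) ∧
      (¬ ∃ c > 0, ∀ n, c ≤ ∏ k ∈ Finset.range n, ⨆ i, p k i)) := by
  choose P hPprob hP using fun k => exists_isProbabilityMeasure_real_singleton_eq (hp k) (hps k)
  choose Q hQprob hQ using fun k =>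
    exists_isProbabilityMeasure_real_singleton_eq (fun i => (hq k i).le) (hqs k)
  obtain rfl : p = digitProb P := funext₂ fun k i => (hP k i).symm
  obtain rfl : q = digitProb Q := funext₂ fun k i => (hQ k i).symm
  obtain rfl : μ = Measure.infinitePi P := measure_ext_of_cylinder fun x n => by
    rw [infinitePi_cylinder_eq_prod]
    refine (hμ n x).trans ((ENNReal.ofReal_prod_of_nonneg fun _ _ => measureReal_nonneg).trans ?_)
    exact prod_congr rfl fun _ _ => ofReal_measureReal (measure_ne_top _ _)
  subst hμξ
  have hac := absolutelyContinuous_map_codingMap_iff (P := P) hq hmax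
  have hms := mutuallySingular_map_codingMap_iff (P := P) hq hmax
  have hatoms := measure_atoms_map_codingMap_eq_one_iff (P := P) hq hqs
  have hnull := map_codingMap_singleton_eq_zero_iff (P := P) hq hqs
  refine ⟨?_, hac, hatoms, and_congr hms hnull⟩
  rw [hac, hatoms, hms, hnull]
  tauto
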